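/- Let (W,S) be a Coxeter system such that for each s ≠ t ∈ S the order m(s,t) of st lies in {2} ∪ 4ℕ (that is, m(s,t) equals 2 or is a positive multiple of 4) or is infinite. Then the Coxeter group W is rigid: for every Coxeter generating set S' for W, there exists a bijection ψ : S → S' such that m(s,t) = m'(ψ(s),ψ(t)) for all s,t ∈ S. -/

import Mathlib

/-!
Write `s i` for the simple reflections of the first system and `t x` for those of the second.

All labels `m i j` with `i ≠ j` being even, the homomorphisms `W → ℤ/2` dual to the `s i` exist and
form a basis of `Hom(W, ℤ/2)`. Comparing it with the basis coming from the `t x` gives a surjection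
`x ↦ τ x` such that `t x` takes the value `1` under the parity dual to `s (τ x)`.

For `i = τ x` and `j = τ y` with `4 ∣ m i j`, sending all the other simple reflections to `1` maps
`W` onto the dihedral group of order `2 m i j` (infinite if `m i j = 0`). The parities dual to `s i`
and `s j` factor through it, and since `4 ∣ m i j` they vanish on its centre, so every `t z` on
which one of them is `1` maps to a reflection. The `t z` on which the parity dual to `s i` is `1`
all have the same image up to the centre: under the map which agrees on them with the given one and
is trivial on the other `t z`, exactly the elements of parity `1` become reflections, so that every
`s k` with `k ≠ i` becomes a rotation of order at most two and is central. The same holds for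
`s j`, and a `t z` on which both parities are `0` maps into the centre, so the images of `t x` and
`t y` generate the dihedral group up to its centre. This forces `m i j ∣ m' x y`; when
`m i j = 2` a parity argument suffices.

Therefore `t x ↦ s (τ x)` extends to a surjective endomorphism of `W`. Reducing modulo a prime the
reflection representations of Coxeter groups with finite labels yields finite quotients of `W` that
detect the labels, so by the argument of Malcev a surjective endomorphism preserves the orders of
the products `t x * t y`. Hence `m i j = m' x y`, and `τ` is a bijection.
-/

open Additive (ofMul)
open Module

/-! ### Reflection representations -/

section ReflectionPair

variable {F V : Type*} [Field F] [AddCommGroup V] [Module F V] {x y : V} {f g : Dual F V}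
  (hf : f x = 2) (hg : g y = 2) {ξ : F}

theorem reflection_mul_reflection_apply_smul_add (hξ : ξ ≠ 0) (hfy : f y = -(ξ + ξ⁻¹))
    (hgx : g x = -(ξ + ξ⁻¹)) :
    (reflection hf * reflection hg) (ξ • x + y) = ξ ^ 2 • (ξ • x + y) := by
  simp only [LinearEquiv.mul_apply, reflection_apply, map_add, map_sub, map_smul,
    hf, hg, hfy, hgx]
  match_scalars <;> field_simp <;> ring

theorem reflection_mul_reflection_pow_apply_smul_add (hξ : ξ ≠ 0) (hfy : f y = -(ξ + ξ⁻¹))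
    (hgx : g x = -(ξ + ξ⁻¹)) (n : ℕ) :
    ((reflection hf * reflection hg) ^ n) (ξ • x + y) = (ξ ^ 2) ^ n • (ξ • x + y) := by
  induction n with
  | zero => simp
  | succ n ih =>
    rw [pow_succ, LinearEquiv.mul_apply, reflection_mul_reflection_apply_smul_add hf hg hξ hfy hgx,
      map_smul, ih, smul_smul, ← pow_succ']

theorem dvd_of_reflection_mul_reflection_pow_eq_one {m n : ℕ} (hm : m ≠ 0)
    (hξ : IsPrimitiveRoot ξ (2 * m)) (hfy : f y = -(ξ + ξ⁻¹)) (hgx : g x = -(ξ + ξ⁻¹))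
    (hv : ξ • x + y ≠ 0) (hn : (reflection hf * reflection hg) ^ n = 1) : m ∣ n := by
  have hpow := reflection_mul_reflection_pow_apply_smul_add hf hg (hξ.ne_zero (by lia)) hfy hgx n
  rw [hn, LinearEquiv.coe_one, id, ← one_smul F (ξ • x + y), smul_smul, mul_one] at hpow
  have hpow : ξ ^ (2 * n) = 1 := by
    rw [pow_mul]
    exact (smul_left_injective F hv hpow).symm
  exact Nat.dvd_of_mul_dvd_mul_left two_pos (hξ.dvd_of_pow_eq_one _ hpow)

/-- The product of the reflections fixes the common kernel of `f` and `g`, and on the plane spanned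
by `x` and `y` it has the eigenvalues `ξ ^ 2` and `ξ⁻¹ ^ 2`. -/
theorem reflection_mul_reflection_pow_eq_one {m : ℕ} (hm : 1 < m)
    (hξ : IsPrimitiveRoot ξ (2 * m)) (hfy : f y = -(ξ + ξ⁻¹)) (hgx : g x = -(ξ + ξ⁻¹)) :
    (reflection hf * reflection hg) ^ m = 1 := by
  have hξ0 : ξ ≠ 0 := hξ.ne_zero (by lia)
  have hξ2 : ξ ^ 2 - 1 ≠ 0 :=
    sub_ne_zero.2 (hξ.pow_ne_one_of_pos_of_lt two_ne_zero (by lia))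
  have hpow : (ξ ^ 2) ^ m = 1 := by rw [← pow_mul, hξ.pow_eq_one]
  have fixes_pos : ((reflection hf * reflection hg) ^ m) (ξ • x + y) = ξ • x + y := by
    rw [reflection_mul_reflection_pow_apply_smul_add hf hg hξ0 hfy hgx, hpow, one_smul]
  have fixes_neg : ((reflection hf * reflection hg) ^ m) (ξ⁻¹ • x + y) = ξ⁻¹ • x + y := by
    rw [reflection_mul_reflection_pow_apply_smul_add hf hg (inv_ne_zero hξ0)
      (by rw [hfy, inv_inv, add_comm]) (by rw [hgx, inv_inv, add_comm]), inv_pow, inv_pow, hpow,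
      inv_one, one_smul]
  have fixes_ker : ∀ p, f p = 0 → g p = 0 → ((reflection hf * reflection hg) ^ m) p = p := by
    intro p hfp hgp
    rw [LinearEquiv.coe_pow]
    refine Function.iterate_fixed ?_ m
    simp [reflection_apply, hfp, hgp]
  ext z
  let α := -ξ * (ξ * g z + f z) / (ξ ^ 2 - 1) ^ 2
  let β := -ξ ^ 2 * (g z + ξ * f z) / (ξ ^ 2 - 1) ^ 2
  have hp := fixes_ker (z - α • (ξ • x + y) - β • (ξ⁻¹ • x + y))
    (by simp only [map_sub, map_smul, map_add, hf, hfy, smul_eq_mul, α, β]; field_simp; ring)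
    (by simp only [map_sub, map_smul, map_add, hg, hgx, smul_eq_mul, α, β]; field_simp; ring)
  simpa only [map_sub, map_smul, fixes_pos, fixes_neg, sub_left_inj, LinearEquiv.coe_one, id]
    using hp

end ReflectionPair

theorem exists_isLiftable_of_isPrimitiveRoot {B F : Type*} [Field F] (M : CoxeterMatrix B)
    (hM : ∀ a b, M a b ≠ 0) (ξ : ℕ → F) (hξ : ∀ a b, IsPrimitiveRoot (ξ (M a b)) (2 * M a b)) :
    ∃ r : B → (B →₀ F) ≃ₗ[F] (B →₀ F),
      M.IsLiftable r ∧ ∀ a b n, (r a * r b) ^ n = 1 → M a b ∣ n := by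
  let f (a : B) : Dual F (B →₀ F) :=
    Finsupp.linearCombination F fun b ↦ -(ξ (M a b) + (ξ (M a b))⁻¹)
  have f_single (a b : B) : f a (Finsupp.single b 1) = -(ξ (M a b) + (ξ (M a b))⁻¹) := by
    simp [f]
  have f_single_symm (a b : B) : f b (Finsupp.single a 1) = -(ξ (M a b) + (ξ (M a b))⁻¹) := by
    rw [f_single, M.symmetric]
  have f_self (a : B) : f a (Finsupp.single a 1) = 2 := by
    have h := hξ a a
    rw [M.diagonal, mul_one] at h
    rw [f_single, M.diagonal, h.eq_neg_one_of_two_right]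
    norm_num
  refine ⟨fun a ↦ reflection (f_self a), fun a b ↦ ?_, fun a b n h ↦ ?_⟩ <;>
    rcases eq_or_ne a b with rfl | hab
  · rw [M.diagonal, pow_one]
    exact LinearEquiv.ext (involutive_reflection (f_self a))
  · have hab1 : 1 < M a b := (Nat.two_le_iff _).2 ⟨hM a b, M.off_diagonal a b hab⟩
    exact reflection_mul_reflection_pow_eq_one (f_self a) (f_self b) hab1 (hξ a b)
      (f_single a b) (f_single_symm a b)
  · simp
  · refine dvd_of_reflection_mul_reflection_pow_eq_one (f_self a) (f_self b) (hM a b) (hξ a b)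
      (f_single a b) (f_single_symm a b) (fun hv ↦ ?_) h
    simpa [hab] using DFunLike.congr_fun hv b

/-- The Coxeter matrix obtained by replacing every infinite label (encoded as `0`) by `k`. Its
Coxeter group is a quotient of the original one. -/
def truncateInfinity {B : Type*} (M : CoxeterMatrix B) (k : ℕ) (hk : k ≠ 1) : CoxeterMatrix B where
  M := .of fun a b ↦ if M a b = 0 then k else M a b
  isSymm := by ext a b; simp [M.symmetric]
  diagonal a := by simp
  off_diagonal a b hab := by
    have := M.off_diagonal a b hab
    simp only [Matrix.of_apply]
    split_ifs <;> assumption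

theorem truncateInfinity_apply {B : Type*} (M : CoxeterMatrix B) {k : ℕ} (hk : k ≠ 1) (a b : B) :
    truncateInfinity M k hk a b = if M a b = 0 then k else M a b :=
  rfl

theorem exists_prime_isPrimitiveRoot {N : ℕ} (hN : N ≠ 0) :
    ∃ p : ℕ, p.Prime ∧ ∃ ζ : ZMod p, IsPrimitiveRoot ζ N := by
  obtain ⟨p, hp, -, hmod⟩ := Nat.exists_prime_gt_modEq_one (k := N) 0 hN
  have : Fact p.Prime := ⟨hp⟩
  obtain ⟨u, hu⟩ := IsCyclic.exists_ofOrder_eq_natCard (α := (ZMod p)ˣ)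
  rw [Nat.card_eq_fintype_card, ZMod.card_units] at hu
  obtain ⟨e, he⟩ : N ∣ p - 1 := (Nat.modEq_iff_dvd' hp.one_lt.le).1 hmod.symm
  have hζ := (hu ▸ IsPrimitiveRoot.orderOf u).pow (Nat.sub_pos_of_lt hp.one_lt)
    (he.trans (mul_comm N e))
  exact ⟨p, hp, (u ^ e : (ZMod p)ˣ), IsPrimitiveRoot.coe_units_iff.2 hζ⟩

universe u in
theorem exists_finite_group_isLiftable {B : Type u} [Finite B] (M : CoxeterMatrix B)
    (hM : ∀ a b, M a b ≠ 0) :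
    ∃ (G : Type u) (_ : Group G) (_ : Finite G) (r : B → G),
      M.IsLiftable r ∧ ∀ a b n, (r a * r b) ^ n = 1 → M a b ∣ n := by
  have := Fintype.ofFinite B
  let N := ∏ a, ∏ b, 2 * M a b
  have hN : N ≠ 0 := by simp [N, Finset.prod_ne_zero_iff, hM]
  have hdvd (a b : B) : 2 * M a b ∣ N :=
    (Finset.dvd_prod_of_mem _ (Finset.mem_univ b)).trans
      (Finset.dvd_prod_of_mem (fun a ↦ ∏ b, 2 * M a b) (Finset.mem_univ a))
  obtain ⟨p, hp, ζ, hζ⟩ := exists_prime_isPrimitiveRoot hN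
  have : Fact p.Prime := ⟨hp⟩
  have : Finite (B →₀ ZMod p) := DFunLike.finite _
  exact ⟨_, inferInstance, DFunLike.finite ((B →₀ ZMod p) ≃ₗ[ZMod p] (B →₀ ZMod p)),
    exists_isLiftable_of_isPrimitiveRoot M hM (fun k ↦ ζ ^ (N / (2 * k)))
      fun a b ↦ hζ.pow hN.bot_lt (Nat.div_mul_cancel (hdvd a b)).symm⟩

universe u in
theorem exists_finite_hom_pow_ne_one {B : Type u} {W : Type*} [Finite B] [Group W]
    {M : CoxeterMatrix B} (cs : CoxeterSystem M W) {a b : B} {n : ℕ} (h : ¬ M a b ∣ n) :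
    ∃ (G : Type u) (_ : Group G) (_ : Finite G) (φ : W →* G),
      φ (cs.simple a * cs.simple b) ^ n ≠ 1 := by
  let M' := truncateInfinity M (n + 2) (by lia)
  have hM' (c d : B) : M' c d ≠ 0 := by
    rw [truncateInfinity_apply]
    split_ifs <;> lia
  have hdvd (c d : B) : M' c d ∣ M c d := by
    rw [truncateInfinity_apply]
    split_ifs with hcd <;> simp [hcd]
  have hnot : ¬ M' a b ∣ n := by
    rw [truncateInfinity_apply]
    split_ifs with hab
    · rw [hab, zero_dvd_iff] at h
      exact Nat.not_dvd_of_pos_of_lt (Nat.pos_of_ne_zero h) (by lia)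
    · exact h
  obtain ⟨G, _, _, r, hr, hfaithful⟩ := exists_finite_group_isLiftable M' hM'
  have hr' : M.IsLiftable r := fun c d ↦ by
    obtain ⟨k, hk⟩ := hdvd c d
    rw [hk, pow_mul, hr, one_pow]
  refine ⟨G, inferInstance, inferInstance, cs.lift ⟨r, hr'⟩, fun hone ↦ hnot (hfaithful a b n ?_)⟩
  rwa [map_mul, cs.lift_apply_simple, cs.lift_apply_simple] at hone

/-! ### Surjective endomorphisms -/

theorem finite_monoidHom_of_fg (W G : Type*) [Group W] [Group.FG W] [Group G] [Finite G] :
    Finite (W →* G) := by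
  obtain ⟨S, hS, hfin⟩ := Group.fg_iff.1 ‹Group.FG W›
  have := hfin.to_subtype
  refine Finite.of_injective (fun (φ : W →* G) (s : S) ↦ φ s) fun φ₁ φ₂ h ↦ ?_
  exact MonoidHom.eq_of_eqOn_dense hS fun s hs ↦ congrFun h ⟨s, hs⟩

theorem exists_eq_comp_of_surjective {W G : Type*} [Group W] [Group.FG W] [Group G] [Finite G]
    {φ : W →* W} (hφ : Function.Surjective φ) (g : W →* G) : ∃ f : W →* G, g = f.comp φ := by
  have := finite_monoidHom_of_fg W G
  have hinj : Function.Injective fun f : W →* G ↦ f.comp φ := fun f₁ f₂ h ↦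
    (MonoidHom.cancel_right hφ).1 h
  obtain ⟨f, hf⟩ := Finite.surjective_of_injective hinj g
  exact ⟨f, hf.symm⟩

section CoxeterSystem

variable {B B' W : Type*} [Group W] {M : CoxeterMatrix B} {M' : CoxeterMatrix B'}
  (cs : CoxeterSystem M W) (cs' : CoxeterSystem M' W)

theorem dvd_orderOf_map_of_surjective [Finite B] {φ : W →* W} (hφ : Function.Surjective φ)
    (a b : B) : M a b ∣ orderOf (φ (cs.simple a * cs.simple b)) := by
  by_contra h
  obtain ⟨G, _, _, g, hg⟩ := exists_finite_hom_pow_ne_one cs h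
  have : Group.FG W := Group.fg_iff.2
    ⟨_, cs.subgroup_closure_range_simple, Set.finite_range cs.simple⟩
  obtain ⟨f, rfl⟩ := exists_eq_comp_of_surjective hφ g
  rw [MonoidHom.comp_apply, ← map_pow, pow_orderOf_eq_one, map_one] at hg
  exact hg rfl

theorem orderOf_simple_mul_simple [Finite B] (a b : B) :
    orderOf (cs.simple a * cs.simple b) = M a b :=
  Nat.dvd_antisymm (orderOf_dvd_of_pow_eq_one (cs.simple_mul_simple_pow a b))
    (dvd_orderOf_map_of_surjective cs (φ := .id W) Function.surjective_id a b)

/-- The map `t x ↦ s (τ x)` on simple reflections extends to a surjective endomorphism of the group,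
which cannot shrink the orders seen in finite quotients. -/
theorem exists_equiv_of_surjective_of_dvd [Finite B'] (cs : CoxeterSystem M W)
    (cs' : CoxeterSystem M' W) {τ : B' → B} (hτ : Function.Surjective τ)
    (hdvd : ∀ x y, M (τ x) (τ y) ∣ M' x y) : ∃ ψ : B ≃ B', ∀ i j, M i j = M' (ψ i) (ψ j) := by
  have hlift : M'.IsLiftable fun x ↦ cs.simple (τ x) := fun x y ↦ by
    obtain ⟨k, hk⟩ := hdvd x y
    rw [hk, pow_mul, cs.simple_mul_simple_pow, one_pow]
  have hφ : Function.Surjective (cs'.lift ⟨_, hlift⟩) := by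
    rw [← MonoidHom.range_eq_top, ← top_le_iff, ← cs.subgroup_closure_range_simple,
      Subgroup.closure_le]
    rintro _ ⟨i, rfl⟩
    obtain ⟨x, rfl⟩ := hτ i
    exact ⟨cs'.simple x, cs'.lift_apply_simple hlift x⟩
  have hdvd' (x y : B') : M' x y ∣ M (τ x) (τ y) := by
    refine (dvd_orderOf_map_of_surjective cs' hφ x y).trans ?_
    rw [map_mul, cs'.lift_apply_simple hlift, cs'.lift_apply_simple hlift]
    exact orderOf_dvd_of_pow_eq_one (cs.simple_mul_simple_pow _ _)
  have hM (x y : B') : M (τ x) (τ y) = M' x y := Nat.dvd_antisymm (hdvd x y) (hdvd' x y)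
  have hinj : Function.Injective τ := fun x y hxy ↦ by
    by_contra hne
    refine M'.off_diagonal x y hne ?_
    rw [← hM, hxy, M.diagonal]
  have hτψ := Equiv.ofBijective_apply_symm_apply τ ⟨hinj, hτ⟩
  exact ⟨(Equiv.ofBijective τ ⟨hinj, hτ⟩).symm, fun i j ↦ by rw [← hM, hτψ, hτψ]⟩

/-! ### Parities -/

/-- The `𝔽₂`-vector space of homomorphisms from `W` to the group with two elements. -/
abbrev Parity (W : Type*) [Group W] : Type _ :=
  Additive W →+ ZMod 2

theorem Parity.ext_simple {χ χ' : Parity W}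
    (h : ∀ i, χ (ofMul (cs.simple i)) = χ' (ofMul (cs.simple i))) : χ = χ' :=
  AddMonoidHom.toMultiplicativeRight.injective <| cs.ext_simple h

theorem even_of_parity_ne {i j : B} (χ : Parity W)
    (h : χ (ofMul (cs.simple i)) ≠ χ (ofMul (cs.simple j))) : Even (M i j) := by
  have hpow := congrArg (fun w ↦ χ (ofMul w)) (cs.simple_mul_simple_pow i j)
  simp only [ofMul_pow, ofMul_mul, map_nsmul, map_add, ofMul_one, map_zero, nsmul_eq_mul,
    mul_eq_zero, CharTwo.add_eq_zero, h, or_false, ZMod.natCast_eq_zero_iff_even] at hpow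
  exact hpow

theorem exists_parity (v : B → ZMod 2) (hv : ∀ i j, v i ≠ v j → Even (M i j)) :
    ∃ χ : Parity W, ∀ i, χ (ofMul (cs.simple i)) = v i := by
  have hlift : M.IsLiftable fun i ↦ Multiplicative.ofAdd (v i) := fun i j ↦ by
    rw [← ofAdd_add, ← ofAdd_nsmul, ofAdd_eq_one, nsmul_eq_mul, mul_eq_zero, CharTwo.add_eq_zero,
      ZMod.natCast_eq_zero_iff_even]
    exact (em (v i = v j)).symm.imp_left (hv i j)
  exact ⟨MonoidHom.toAdditiveLeft (cs.lift ⟨_, hlift⟩), cs.lift_apply_simple hlift⟩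

/-- `χ` is the parity dual to the simple reflection `i`: it counts modulo two the occurrences
of `i` in words for a group element. -/
structure IsDualParity (i : B) (χ : Parity W) : Prop where
  apply_self : χ (ofMul (cs.simple i)) = 1
  apply_of_ne : ∀ k, k ≠ i → χ (ofMul (cs.simple k)) = 0

/-! ### Matching the generators -/

theorem exists_equiv_apply_single_ne_zero {ι κ F : Type*} [Field F] [Finite ι] [Finite κ]
    [DecidableEq ι] (L : (ι → F) ≃ₗ[F] (κ → F)) :
    ∃ ψ : ι ≃ κ, ∀ i, L (Pi.single i 1) (ψ i) ≠ 0 := by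
  have := Fintype.ofFinite ι
  have := Fintype.ofFinite κ
  have hcard : Fintype.card ι = Fintype.card κ := by simpa using L.finrank_eq
  let e := Fintype.equivOfCardEq hcard
  let L' : (ι → F) ≃ₗ[F] (ι → F) := L.trans (LinearEquiv.funCongrLeft F F e)
  have hdet : (LinearMap.toMatrix' L'.toLinearMap).det ≠ 0 := by
    rw [LinearMap.det_toMatrix']
    exact (LinearEquiv.isUnit_det' _).ne_zero
  rw [Matrix.det_apply] at hdet
  obtain ⟨σ, -, hσ⟩ := Finset.exists_ne_zero_of_sum_ne_zero hdet
  refine ⟨σ.trans e, fun i hi ↦ hσ ?_⟩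
  rw [Finset.prod_eq_zero (Finset.mem_univ i), smul_zero]
  simpa [LinearMap.toMatrix'_apply, L'] using hi

theorem exists_parity_linearEquiv {P : Type*} {π : B → P} (hπ : Function.Surjective π)
    (hcongr : ∀ i j (χ : Parity W), π i = π j → χ (ofMul (cs.simple i)) = χ (ofMul (cs.simple j)))
    (heven : ∀ i j, π i ≠ π j → Even (M i j)) :
    ∃ e : Parity W ≃ₗ[ZMod 2] (P → ZMod 2), ∀ χ i, e χ (π i) = χ (ofMul (cs.simple i)) := by
  let rep := Function.surjInv hπ
  have hrep : Function.RightInverse rep π := Function.rightInverse_surjInv hπ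
  let ev : Parity W →ₗ[ZMod 2] (P → ZMod 2) :=
    { toFun χ p := χ (ofMul (cs.simple (rep p)))
      map_add' _ _ := rfl
      map_smul' _ _ := rfl }
  have ev_apply (χ : Parity W) (i : B) : ev χ (π i) = χ (ofMul (cs.simple i)) :=
    hcongr _ _ χ (hrep (π i))
  refine ⟨.ofBijective ev ⟨fun χ χ' h ↦ ?_, fun v ↦ ?_⟩, ev_apply⟩
  · exact Parity.ext_simple cs fun i ↦ by rw [← ev_apply, h, ev_apply]
  · obtain ⟨χ, hχ⟩ := exists_parity cs (v ∘ π) fun i j h ↦ heven i j fun hij ↦ h (congrArg v hij)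
    exact ⟨χ, funext fun p ↦ by rw [← hrep p, ev_apply, hχ, Function.comp_apply]⟩

/-- The parities dual to the simple reflections of `cs` and the indicator functions of the classes
of simple reflections of `cs'` that no parity separates are two bases of `Parity W`; the matching
is a nonzero term of the determinant of the base change. -/
theorem exists_matching [Finite B] [Finite B'] (heven : ∀ i j, i ≠ j → Even (M i j)) :
    ∃ τ : B' → B, Function.Surjective τ ∧ (∀ x y, τ x ≠ τ y → Even (M' x y)) ∧
      ∀ x χ, IsDualParity cs (τ x) χ → χ (ofMul (cs'.simple x)) = 1 := by
  classical
  let r : Setoid B' := Setoid.ker fun x (χ : Parity W) ↦ χ (ofMul (cs'.simple x))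
  have heven' (x y : B') (hxy : Quotient.mk r x ≠ Quotient.mk r y) : Even (M' x y) := by
    obtain ⟨χ, hχ⟩ := Function.ne_iff.1 fun h ↦ hxy (Quotient.sound h)
    exact even_of_parity_ne cs' χ hχ
  obtain ⟨e, he⟩ := exists_parity_linearEquiv cs Function.surjective_id
    (by rintro i _ χ rfl; rfl) heven
  obtain ⟨e', he'⟩ := exists_parity_linearEquiv cs' (Quotient.mk_surjective (s := r))
    (fun x y χ h ↦ congrFun (Quotient.exact h) χ) heven'
  obtain ⟨ψ, hψ⟩ := exists_equiv_apply_single_ne_zero (e.symm.trans e')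
  refine ⟨fun x ↦ ψ.symm (Quotient.mk r x), ψ.symm.surjective.comp Quotient.mk_surjective,
    fun x y h ↦ heven' x y fun hxy ↦ h (congrArg ψ.symm hxy), fun x χ hχ ↦ ?_⟩
  have hχe : e χ = Pi.single (ψ.symm (Quotient.mk r x)) 1 := funext fun k ↦ by
    refine (he χ k).trans ?_
    rcases eq_or_ne k (ψ.symm (Quotient.mk r x)) with rfl | hk
    · rw [hχ.apply_self, Pi.single_eq_same]
    · rw [hχ.apply_of_ne k hk, Pi.single_eq_of_ne hk]
  have hne := hψ (ψ.symm (Quotient.mk r x))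
  rw [← hχe, LinearEquiv.trans_apply, e.symm_apply_apply, ψ.apply_symm_apply, he'] at hne
  exact Fin.eq_one_of_ne_zero _ hne

/-! ### Maps to dihedral groups -/

section Dihedral

open DihedralGroup

variable {n : ℕ}

/-- The homomorphism to `ℤ/2` which is `φ` on rotations and sends the reflection `sr 0` to `e`. -/
def dihedralParity (φ : ZMod n →+ ZMod 2) (e : ZMod 2) : Parity (DihedralGroup n) :=
  MonoidHom.toAdditiveLeft <| MonoidHom.mk'
    (fun
      | r a => .ofAdd (φ a)
      | sr a => .ofAdd (e + φ a))
    (by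
      rintro (a | a) (b | b) <;> refine congrArg Multiplicative.ofAdd ?_ <;>
        simp only [map_add, map_sub, CharTwo.sub_eq_add, toAdd_ofAdd] <;>
        grind [CharTwo.add_self_eq_zero])

theorem dihedralParity_r (φ : ZMod n →+ ZMod 2) (e : ZMod 2) (a : ZMod n) :
    dihedralParity φ e (ofMul (r a)) = φ a :=
  rfl

theorem dihedralParity_sr (φ : ZMod n →+ ZMod 2) (e : ZMod 2) (a : ZMod n) :
    dihedralParity φ e (ofMul (sr a)) = e + φ a :=
  rfl

/-- The rotations by elements of `H` and the reflections `sr a` with `a ∈ c + H`. -/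
def dihedralSubgroup (H : AddSubgroup (ZMod n)) (c : ZMod n) : Subgroup (DihedralGroup n) where
  carrier := {g | match g with
    | r a => a ∈ H
    | sr a => a - c ∈ H}
  one_mem' := H.zero_mem
  mul_mem' := by
    rintro (a | a) (b | b) (ha : _ ∈ H) (hb : _ ∈ H)
    · exact H.add_mem ha hb
    · change b - a - c ∈ H
      exact sub_right_comm b c a ▸ H.sub_mem hb ha
    · change a + b - c ∈ H
      exact sub_add_eq_add_sub a c b ▸ H.add_mem ha hb
    · change b - a ∈ H
      exact sub_sub_sub_cancel_right b a c ▸ H.sub_mem hb ha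
  inv_mem' := by
    rintro (a | a) (ha : _ ∈ H)
    · exact H.neg_mem ha
    · exact ha

theorem r_mem_dihedralSubgroup {H : AddSubgroup (ZMod n)} {a c : ZMod n} :
    r a ∈ dihedralSubgroup H c ↔ a ∈ H :=
  Iff.rfl

theorem sr_mem_dihedralSubgroup {H : AddSubgroup (ZMod n)} {a c : ZMod n} :
    sr a ∈ dihedralSubgroup H c ↔ a - c ∈ H :=
  Iff.rfl

theorem dihedralSubgroup_le {H K : AddSubgroup (ZMod n)} {c d : ZMod n} (hHK : H ≤ K)
    (hcd : c - d ∈ K) : dihedralSubgroup H c ≤ dihedralSubgroup K d := by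
  rintro (a | a) (ha : _ ∈ H)
  · exact hHK ha
  · exact sr_mem_dihedralSubgroup.2 (sub_add_sub_cancel a c d ▸ add_mem (hHK ha) hcd)

theorem r_sq_eq_one_iff {a : ZMod n} : (r a : DihedralGroup n) ^ 2 = 1 ↔ 2 * a = 0 := by
  rw [r_pow, one_def, r.injEq, mul_comm, Nat.cast_ofNat]

theorem map_mem_of_forall_simple {G : Type*} [Group G] {f : W →* G} {K : Subgroup G}
    (h : ∀ i, f (cs.simple i) ∈ K) (w : W) : f w ∈ K := by
  induction w using cs.simple_induction with
  | simple i => exact h i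
  | one => exact map_one f ▸ K.one_mem
  | mul w w' hw hw' => exact map_mul f w w' ▸ K.mul_mem hw hw'

theorem exists_hom_mulIndicator {G : Type*} [Group G] {S : Set B} {r : B → G}
    (hr : ∀ i ∈ S, ∀ j ∈ S, (r i * r j) ^ M i j = 1) (hS : ∀ i ∈ S, ∀ j ∉ S, Even (M i j)) :
    ∃ f : W →* G, (∀ i ∈ S, f (cs.simple i) = r i) ∧ ∀ i ∉ S, f (cs.simple i) = 1 := by
  have hsq (i) (hi : i ∈ S) : r i ^ 2 = 1 := by simpa [sq] using hr i hi i hi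
  have hpow (i) (hi : i ∈ S) {n : ℕ} (hn : Even n) : r i ^ n = 1 := by
    obtain ⟨k, rfl⟩ := hn.two_dvd
    rw [pow_mul, hsq i hi, one_pow]
  have hlift : M.IsLiftable (S.mulIndicator r) := fun i j ↦ by
    by_cases hi : i ∈ S <;> by_cases hj : j ∈ S <;> simp only [hi, hj, Set.mulIndicator_of_mem,
      Set.mulIndicator_of_notMem, not_false_eq_true, mul_one, one_mul, one_pow]
    · exact hr i hi j hj
    · exact hpow i hi (hS i hi j hj)
    · exact hpow j hj (M.symmetric i j ▸ hS j hj i hi)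
  exact ⟨cs.lift ⟨_, hlift⟩,
    fun i hi ↦ by rw [cs.lift_apply_simple, Set.mulIndicator_of_mem hi],
    fun i hi ↦ by rw [cs.lift_apply_simple, Set.mulIndicator_of_notMem hi]⟩

theorem exists_hom_dihedralGroup (heven : ∀ k l, k ≠ l → Even (M k l)) {i j : B} (hij : i ≠ j) :
    ∃ f : W →* DihedralGroup (M i j), f (cs.simple i) = sr 0 ∧ f (cs.simple j) = sr 1 ∧
      ∀ k, k ≠ i → k ≠ j → f (cs.simple k) = 1 := by
  classical
  obtain ⟨f, hf, hf'⟩ := exists_hom_mulIndicator cs (S := {i, j})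
    (r := fun k ↦ if k = i then sr (0 : ZMod (M i j)) else sr 1)
    (by
      rintro k (rfl | rfl) l (rfl | rfl)
      · simp
      · simp [hij.symm]
      · simp [hij.symm, M.symmetric k l]
      · simp [hij.symm])
    (fun k hk l hl ↦ heven k l fun h ↦ hl (h ▸ hk))
  exact ⟨f, by simp [hf], by simp [hf, hij.symm], fun k hi hj ↦ hf' k (by simp [hi, hj])⟩

theorem exists_eq_sr_of_dihedralParity_eq_one {φ : ZMod n →+ ZMod 2} {e : ZMod 2}
    (hφ : ∀ a, 2 * a = 0 → φ a = 0) {g : DihedralGroup n} (hg : g ^ 2 = 1)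
    (h : dihedralParity φ e (ofMul g) = 1) : ∃ a, g = sr a := by
  rcases g with a | a
  · rw [dihedralParity_r, hφ a (r_sq_eq_one_iff.1 hg)] at h
    exact absurd h zero_ne_one
  · exact ⟨a, rfl⟩

/-- The elements of order at most two of `ℤ/n`. -/
abbrev twoTorsion (n : ℕ) : AddSubgroup (ZMod n) :=
  (AddMonoidHom.mulLeft 2).ker

theorem mem_dihedralSubgroup_of_dihedralParity_ne_one {φ : ZMod n →+ ZMod 2} {g : DihedralGroup n}
    (hg : g ^ 2 = 1) (h : ∀ e, dihedralParity φ e (ofMul g) ≠ 1) (c : ZMod n) :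
    g ∈ dihedralSubgroup (twoTorsion n) c := by
  rcases g with a | a
  · exact r_sq_eq_one_iff.1 hg
  · exact absurd (sub_add_cancel 1 (φ a)) (h (1 - φ a))

theorem exists_hom_eqOn_dihedralParity_eq (χ : Parity W) (f : W →* DihedralGroup n)
    (hf : ∀ i, χ (ofMul (cs.simple i)) = 1 → ∃ a, f (cs.simple i) = sr a) :
    ∃ g : W →* DihedralGroup n,
      (∀ i, χ (ofMul (cs.simple i)) = 1 → g (cs.simple i) = f (cs.simple i)) ∧
        ∀ w, dihedralParity 0 1 (ofMul (g w)) = χ (ofMul w) := by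
  obtain ⟨g, hg, hg'⟩ := exists_hom_mulIndicator cs (S := {i | χ (ofMul (cs.simple i)) = 1})
    (r := fun i ↦ f (cs.simple i))
    (fun i _ j _ ↦ by rw [← map_mul, ← map_pow, cs.simple_mul_simple_pow, map_one])
    (fun i hi j hj ↦ even_of_parity_ne cs χ fun h ↦ hj (h.symm.trans hi))
  refine ⟨g, hg, fun w ↦ ?_⟩
  suffices h : (dihedralParity 0 1).comp g.toAdditive = χ from DFunLike.congr_fun h (ofMul w)
  refine Parity.ext_simple cs fun i ↦ ?_
  change dihedralParity 0 1 (ofMul (g (cs.simple i))) = _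
  by_cases hi : χ (ofMul (cs.simple i)) = 1
  · obtain ⟨a, ha⟩ := hf i hi
    rw [hg i hi, ha, hi, dihedralParity_sr, AddMonoidHom.zero_apply, add_zero]
  · rw [hg' i hi, ofMul_one, map_zero]
    exact (not_imp_comm.1 (Fin.eq_one_of_ne_zero _) hi).symm

variable {cs} in
theorem exists_forall_mem_dihedralSubgroup {l : B} {χ : Parity W} (hχ : IsDualParity cs l χ)
    {g : W →* DihedralGroup n} (hg : ∀ w, dihedralParity 0 1 (ofMul (g w)) = χ (ofMul w)) :
    ∃ c, ∀ w, g w ∈ dihedralSubgroup (twoTorsion n) c := by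
  have hsq (k : B) : g (cs.simple k) ^ 2 = 1 := by rw [← map_pow, cs.simple_sq, map_one]
  obtain ⟨c, hc⟩ := exists_eq_sr_of_dihedralParity_eq_one (fun _ _ ↦ rfl) (hsq l)
    ((hg _).trans hχ.apply_self)
  refine ⟨c, map_mem_of_forall_simple cs fun k ↦ ?_⟩
  rcases eq_or_ne k l with rfl | hk
  · rw [hc, sr_mem_dihedralSubgroup, sub_self]
    exact zero_mem _
  · have hk0 := (hg _).trans (hχ.apply_of_ne k hk)
    have hk2 := hsq k
    generalize g (cs.simple k) = d at hk0 hk2 ⊢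
    rcases d with u | u
    · exact r_sq_eq_one_iff.1 hk2
    · rw [dihedralParity_sr, AddMonoidHom.zero_apply, add_zero] at hk0
      exact absurd hk0 one_ne_zero

variable {cs} in
/-- Trivialising `f` on the simple reflections outside the support of `χ` gives a homomorphism whose
image meets the rotations in elements of order at most two only. -/
theorem map_simple_mem_dihedralSubgroup {l : B} {χ : Parity W} (hχ : IsDualParity cs l χ)
    (f : W →* DihedralGroup n)
    (hf : ∀ z, χ (ofMul (cs'.simple z)) = 1 → ∃ a, f (cs'.simple z) = sr a) {x y : B'}
    {a : ZMod n} (hx : χ (ofMul (cs'.simple x)) = 1) (hxa : f (cs'.simple x) = sr a)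
    (hy : χ (ofMul (cs'.simple y)) = 1) : f (cs'.simple y) ∈ dihedralSubgroup (twoTorsion n) a := by
  obtain ⟨g, hgf, hg⟩ := exists_hom_eqOn_dihedralParity_eq cs' χ f hf
  obtain ⟨c, hc⟩ := exists_forall_mem_dihedralSubgroup hχ hg
  obtain ⟨b, hb⟩ := hf y hy
  have hxc := hc (cs'.simple x)
  have hyc := hc (cs'.simple y)
  rw [hgf x hx, hxa, sr_mem_dihedralSubgroup] at hxc
  rw [hgf y hy, hb, sr_mem_dihedralSubgroup] at hyc
  rw [hb, sr_mem_dihedralSubgroup, ← sub_sub_sub_cancel_right b a c]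
  exact sub_mem hyc hxc

theorem castHom_eq_zero_of_two_mul_eq_zero (h4 : 4 ∣ n) (h2 : 2 ∣ n) {a : ZMod n}
    (ha : 2 * a = 0) : ZMod.castHom h2 (ZMod 2) a = 0 := by
  obtain ⟨k, rfl⟩ := ZMod.intCast_surjective a
  rw [map_intCast, ZMod.intCast_zmod_eq_zero_iff_dvd]
  have h : ((2 * k : ℤ) : ZMod n) = 0 := by exact_mod_cast ha
  rw [ZMod.intCast_zmod_eq_zero_iff_dvd] at h
  have := (Int.natCast_dvd_natCast.2 h4).trans h
  lia

theorem dvd_of_natCast_mul_eq_zero (h4 : 4 ∣ n) {d : ZMod n}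
    (hd : 1 ∈ twoTorsion n ⊔ AddSubgroup.zmultiples d) {k : ℕ} (hk : (k : ZMod n) * d = 0) :
    n ∣ k := by
  obtain ⟨u, hu, _, ⟨t, rfl⟩, hut⟩ := AddSubgroup.mem_sup.1 hd
  have htd : 2 * (t * d) = 2 := by
    have hu2 : 2 * u = 0 := hu
    have h1 : u + t * d = 1 := by simpa using hut
    linear_combination 2 * h1 - hu2
  obtain ⟨l, rfl⟩ : 2 ∣ k := by
    have h2k : ((2 * k : ℕ) : ZMod n) = 0 := by
      push_cast
      linear_combination 2 * t * hk - k * htd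
    have := h4.trans ((ZMod.natCast_eq_zero_iff _ _).1 h2k)
    lia
  rw [← ZMod.natCast_eq_zero_iff]
  push_cast at hk ⊢
  linear_combination t * hk - l * htd

theorem dvd_of_forall_mem_dihedralSubgroup (h4 : 4 ∣ n) {f : W →* DihedralGroup n}
    (hf : r 1 ∈ f.range) {i j : B} {a b : ZMod n} (hi : f (cs.simple i) = sr a)
    (hj : f (cs.simple j) = sr b)
    (hmem : ∀ k, f (cs.simple k) ∈
      dihedralSubgroup (twoTorsion n ⊔ AddSubgroup.zmultiples (b - a)) a) :
    n ∣ M i j := by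
  obtain ⟨w, hw⟩ := hf
  refine dvd_of_natCast_mul_eq_zero h4 (d := b - a)
    (r_mem_dihedralSubgroup.1 (hw ▸ map_mem_of_forall_simple cs hmem w)) ?_
  have hpow := congrArg f (cs.simple_mul_simple_pow i j)
  rw [map_pow, map_mul, hi, hj, sr_mul_sr, r_pow, map_one, one_def, r.injEq] at hpow
  rwa [mul_comm]

variable {cs} in
theorem isDualParity_dihedralParity_comp {φ : ZMod n →+ ZMod 2} (hφ : φ 1 = 1)
    {f : W →* DihedralGroup n} {i j : B} (hij : i ≠ j) (hi : f (cs.simple i) = sr 0)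
    (hj : f (cs.simple j) = sr 1) (hk : ∀ k, k ≠ i → k ≠ j → f (cs.simple k) = 1) :
    IsDualParity cs i ((dihedralParity φ 1).comp f.toAdditive) ∧
      IsDualParity cs j ((dihedralParity φ 0).comp f.toAdditive) := by
  refine ⟨⟨?_, fun k hki ↦ ?_⟩, ⟨?_, fun k hkj ↦ ?_⟩⟩
  · simp [hi, dihedralParity_sr]
  · rcases eq_or_ne k j with rfl | hkj
    · simp [hj, dihedralParity_sr, hφ, CharTwo.add_self_eq_zero]
    · simp [hk k hki hkj]
  · simp [hj, dihedralParity_sr, hφ]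
  · rcases eq_or_ne k i with rfl | hki
    · simp [hi, dihedralParity_sr]
    · simp [hk k hki hkj]

theorem dvd_of_forall_isDualParity (heven : ∀ k l, k ≠ l → Even (M k l)) {i j : B} (hij : i ≠ j)
    (h4 : 4 ∣ M i j) {x y : B'} (hx : ∀ χ, IsDualParity cs i χ → χ (ofMul (cs'.simple x)) = 1)
    (hy : ∀ χ, IsDualParity cs j χ → χ (ofMul (cs'.simple y)) = 1) : M i j ∣ M' x y := by
  obtain ⟨f, hfi, hfj, hfk⟩ := exists_hom_dihedralGroup cs heven hij
  have h2 : 2 ∣ M i j := .trans (by norm_num) h4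
  let φ : ZMod (M i j) →+ ZMod 2 := (ZMod.castHom h2 (ZMod 2)).toAddMonoidHom
  obtain ⟨hχi, hχj⟩ := isDualParity_dihedralParity_comp (φ := φ) (map_one (ZMod.castHom h2 _))
    hij hfi hfj hfk
  have hsq (z : B') : f (cs'.simple z) ^ 2 = 1 := by rw [← map_pow, cs'.simple_sq, map_one]
  have hrefl (e z) (hz : dihedralParity φ e (ofMul (f (cs'.simple z))) = 1) :
      ∃ a, f (cs'.simple z) = sr a :=
    exists_eq_sr_of_dihedralParity_eq_one
      (fun _ ↦ castHom_eq_zero_of_two_mul_eq_zero h4 h2) (hsq z) hz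
  obtain ⟨a, ha⟩ := hrefl 1 x (hx _ hχi)
  obtain ⟨b, hb⟩ := hrefl 0 y (hy _ hχj)
  have hrot : r 1 ∈ f.range := ⟨cs.simple i * cs.simple j, by
    rw [map_mul, hfi, hfj, sr_mul_sr, sub_zero]⟩
  refine dvd_of_forall_mem_dihedralSubgroup cs' h4 hrot ha hb fun z ↦ ?_
  by_cases hz : ∃ e, dihedralParity φ e (ofMul (f (cs'.simple z))) = 1
  · obtain hz | hz := Fin.exists_fin_two.1 hz
    · exact dihedralSubgroup_le le_sup_left
        (AddSubgroup.mem_sup_right (AddSubgroup.mem_zmultiples _))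
        (map_simple_mem_dihedralSubgroup cs' hχj f (hrefl 0) (hy _ hχj) hb hz)
    · exact dihedralSubgroup_le le_sup_left (sub_self a ▸ zero_mem _)
        (map_simple_mem_dihedralSubgroup cs' hχi f (hrefl 1) (hx _ hχi) ha hz)
  · exact dihedralSubgroup_le le_sup_left (sub_self a ▸ zero_mem _)
      (mem_dihedralSubgroup_of_dihedralParity_ne_one (hsq z) (not_exists.1 hz) a)

end Dihedral

end CoxeterSystem

/-- **Theorem (Radcliffe).** If `(W,S)` is a Coxeter system in which, for all `s ≠ t` in `S`,
the order `m(s,t)` of `st` equals `2`, is a positive multiple of `4`, or is infinite,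
then `W` is rigid: for every Coxeter generating set `S'` of `W` there is a bijection
`ψ : S → S'` with `m(s,t) = m'(ψ s, ψ t)` for all `s, t ∈ S`.
(Here `orderOf x = 0` encodes infinite order.) -/
theorem rigid_of_even_orders {B : Type*} [Fintype B] {W : Type*} [Group W]
    {M : CoxeterMatrix B} (cs : CoxeterSystem M W)
    (hm : ∀ i j : B, i ≠ j →
      orderOf (cs.simple i * cs.simple j) = 2 ∨
      (∃ k : ℕ, 0 < k ∧ orderOf (cs.simple i * cs.simple j) = 4 * k) ∨
      orderOf (cs.simple i * cs.simple j) = 0) :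
    ∀ (B' : Type*) [Fintype B'] (M' : CoxeterMatrix B') (cs' : CoxeterSystem M' W),
      ∃ ψ : B ≃ B', ∀ i j : B,
        orderOf (cs.simple i * cs.simple j)
          = orderOf (cs'.simple (ψ i) * cs'.simple (ψ j)) := by
  intro B' _ M' cs'
  simp only [orderOf_simple_mul_simple] at hm ⊢
  have hM (i j : B) (hij : i ≠ j) : M i j = 2 ∨ 4 ∣ M i j := by
    rcases hm i j hij with h | ⟨k, -, h⟩ | h
    · exact .inl h
    · exact .inr ⟨k, h⟩
    · exact .inr (h ▸ dvd_zero 4)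
  have heven (i j : B) (hij : i ≠ j) : Even (M i j) := by
    rcases hM i j hij with h | h
    · exact h ▸ even_two
    · exact even_iff_two_dvd.2 (.trans (by norm_num) h)
  obtain ⟨τ, hτ, hτeven, hτdual⟩ := exists_matching cs cs' heven
  refine exists_equiv_of_surjective_of_dvd cs cs' hτ fun x y ↦ ?_
  rcases eq_or_ne (τ x) (τ y) with hxy | hxy
  · rw [hxy, M.diagonal]
    exact one_dvd _
  · rcases hM _ _ hxy with h2 | h4
    · exact h2 ▸ (hτeven x y hxy).two_dvd
    · exact dvd_of_forall_isDualParity cs cs' heven hxy h4 (hτdual x) (hτdual y)
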